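/- For Re(x) > 0, the identity J₁(x) + log 2 = 3𝓕₁(x) − 2𝓕₁(2x) − 𝓕₁(x/2) + ((1+x)/(2x))·log 2 holds, where J₁(x) := ∫₀^∞ dt/((1+e^{−t})(1+e^{xt})). -/

import Mathlib

open MeasureTheory Set

noncomputable def digammaC (x : ℂ) : ℂ := deriv Complex.Gamma x / Complex.Gamma x

/-- The Ramanujan period function `𝓕₁`. -/
noncomputable def F1 (x : ℂ) : ℂ :=
  (∑' n : ℕ, (digammaC ((n + 1) * x) - Complex.log ((n + 1) * x) + 1 / (2 * (n + 1) * x))) -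
    (1 / 2) * ((Real.eulerMascheroniConstant : ℂ) - Complex.log (2 * Real.pi / x))

/-- `J₁(x) = ∫₀^∞ dt / ((1+e^{-t})(1+e^{xt}))`. -/
noncomputable def J1 (x : ℂ) : ℂ :=
  ∫ t in Set.Ioi (0 : ℝ), 1 / ((1 + Complex.exp (-(t : ℂ))) * (1 + Complex.exp (x * t)))


namespace J1Proof
open Filter Topology

/-- The Binet kernel. -/
noncomputable def B (t : ℝ) : ℝ := 1 / (Real.exp t - 1) - 1 / t + 1 / 2

lemma exp_sub_one_pos {t : ℝ} (ht : 0 < t) : 0 < Real.exp t - 1 := by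
  have := Real.add_one_lt_exp ht.ne'
  linarith

lemma B_aux {t : ℝ} (ht : 0 ≤ t) : (2 - t) * Real.exp t ≤ 2 + t := by
  have hd : ∀ s : ℝ, HasDerivAt (fun s : ℝ => (2 - s) * Real.exp s - s)
      ((1 - s) * Real.exp s - 1) s := by
    intro s
    have h1 : HasDerivAt (fun s : ℝ => (2 - s)) (-1) s := by
      simpa using (hasDerivAt_id s).const_sub 2
    have := (h1.mul (Real.hasDerivAt_exp s)).sub (hasDerivAt_id s)
    exact this.congr_deriv (by ring)
  have hanti : Antitone (fun s : ℝ => (2 - s) * Real.exp s - s) := by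
    apply antitone_of_hasDerivAt_nonpos hd
    intro s
    have h1 := Real.add_one_le_exp (-s)
    have h2 : Real.exp (-s) * Real.exp s = 1 := by rw [← Real.exp_add]; simp
    have h3 := Real.exp_pos s
    show (1 - s) * Real.exp s - 1 ≤ 0
    nlinarith
  have := hanti ht
  simp at this
  linarith

lemma B_nonneg {t : ℝ} (ht : 0 < t) : 0 ≤ B t := by
  have h := exp_sub_one_pos ht
  have h2 := B_aux ht.le
  unfold B
  have : 1 / (Real.exp t - 1) - 1 / t + 1 / 2
      = (2 + t - (2 - t) * Real.exp t) / (2 * t * (Real.exp t - 1)) := by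
    field_simp
    ring
  rw [this]
  apply div_nonneg
  · linarith
  · positivity

lemma B_le {t : ℝ} (ht : 0 < t) : B t ≤ t / 4 := by
  have h := exp_sub_one_pos ht
  have h1 := Real.quadratic_le_exp_of_nonneg ht.le
  have h2 : 1 / (Real.exp t - 1) ≤ 1 / (t * (1 + t / 2)) := by
    apply one_div_le_one_div_of_le
    · positivity
    · nlinarith
  have h3 : 1 / (t * (1 + t / 2)) ≤ 1 / t - 1 / 2 + t / 4 := by
    rw [div_le_iff₀ (by positivity)]
    have : (1 / t - 1 / 2 + t / 4) * (t * (1 + t / 2)) = 1 + t ^ 3 / 8 := by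
      field_simp
      ring
    rw [this]
    have : 0 < t ^ 3 := by positivity
    linarith
  unfold B
  linarith

lemma abs_B_le {t : ℝ} (ht : 0 < t) : |B t| ≤ t / 4 := by
  rw [abs_of_nonneg (B_nonneg ht)]
  exact B_le ht

lemma measurable_B : Measurable B := by
  unfold B
  fun_prop

lemma integral_t_exp {r : ℝ} (hr : 0 < r) :
    IntegrableOn (fun t : ℝ => t * Real.exp (-(r * t))) (Ioi 0) ∧
    ∫ t in Ioi (0 : ℝ), t * Real.exp (-(r * t)) = 1 / r ^ 2 := by
  have key := Real.integral_rpow_mul_exp_neg_mul_Ioi (a := 2) two_pos hr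
  have h1 : (fun t : ℝ => t ^ ((2 : ℝ) - 1) * Real.exp (-(r * t)))
      = fun t : ℝ => t * Real.exp (-(r * t)) := by
    ext t
    norm_num
  rw [h1] at key
  have hG : Real.Gamma 2 = 1 := by simp
  rw [hG, mul_one] at key
  have e : (1 / r) ^ (2 : ℝ) = 1 / r ^ 2 := by
    rw [show (2 : ℝ) = ((2 : ℕ) : ℝ) by norm_num, Real.rpow_natCast]
    simp
  rw [e] at key
  refine ⟨?_, key⟩
  apply Integrable.of_integral_ne_zero
  rw [key]
  positivity

/-- integrability of the complex Binet integrand -/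
lemma norm_Bexp_le (z : ℂ) {t : ℝ} (ht : 0 < t) :
    ‖(B t : ℂ) * Complex.exp (-(z * t))‖ ≤ (1 / 4) * (t * Real.exp (-(z.re * t))) := by
  rw [norm_mul, Complex.norm_exp, Complex.norm_real]
  have : (-(z * (t : ℂ))).re = -(z.re * t) := by simp
  rw [this, Real.norm_eq_abs]
  have := abs_B_le ht
  have h3 := Real.exp_pos (-(z.re * t))
  nlinarith

lemma meas_Bexp (z : ℂ) : Measurable (fun t : ℝ => (B t : ℂ) * Complex.exp (-(z * t))) := by
  have := measurable_B
  fun_prop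

lemma integrable_Bexp {z : ℂ} (hz : 0 < z.re) :
    IntegrableOn (fun t : ℝ => (B t : ℂ) * Complex.exp (-(z * t))) (Ioi 0) := by
  refine Integrable.mono' ((integral_t_exp hz).1.const_mul (1 / 4))
    (meas_Bexp z).aestronglyMeasurable ?_
  filter_upwards [ae_restrict_mem measurableSet_Ioi] with t ht
  exact norm_Bexp_le z ht

lemma integral_norm_Bexp_le {z : ℂ} (hz : 0 < z.re) :
    ∫ t in Ioi (0 : ℝ), ‖(B t : ℂ) * Complex.exp (-(z * t))‖ ≤ 1 / 4 * (1 / z.re ^ 2) := by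
  rw [← (integral_t_exp hz).2, ← integral_const_mul]
  apply setIntegral_mono_on (integrable_Bexp hz).norm ((integral_t_exp hz).1.const_mul (1 / 4))
    measurableSet_Ioi
  intro t ht
  exact norm_Bexp_le z ht

noncomputable def I (z : ℂ) : ℂ := ∫ t in Ioi (0 : ℝ), (B t : ℂ) * Complex.exp (-(z * t))

lemma norm_I_le {z : ℂ} (hz : 0 < z.re) : ‖I z‖ ≤ 1 / 4 * (1 / z.re ^ 2) :=
  (norm_integral_le_integral_norm _).trans (integral_norm_Bexp_le hz)

lemma I_differentiableAt {z : ℂ} (hz : 0 < z.re) : DifferentiableAt ℂ I z := by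
  have hr : 0 < z.re / 2 := by linarith
  have hr4 : 0 < z.re / 4 := by linarith
  have := hasDerivAt_integral_of_dominated_loc_of_deriv_le
    (μ := volume.restrict (Ioi (0 : ℝ)))
    (F := fun (w : ℂ) (t : ℝ) => (B t : ℂ) * Complex.exp (-(w * t)))
    (F' := fun (w : ℂ) (t : ℝ) => (B t : ℂ) * (Complex.exp (-(w * t)) * (-t)))
    (x₀ := z) (s := {w : ℂ | z.re / 2 < w.re})
    (bound := fun t => (1 / 4) * (1 / (z.re / 4)) * (t * Real.exp (-(z.re / 4 * t))))
    ?_ ?_ ?_ ?_ ?_ ?_ ?_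
  · exact this.2.differentiableAt
  · exact (isOpen_lt continuous_const Complex.continuous_re).mem_nhds (by simp; linarith)
  · exact Eventually.of_forall fun w => (meas_Bexp w).aestronglyMeasurable
  · exact integrable_Bexp hz
  · have := measurable_B
    exact Measurable.aestronglyMeasurable (by fun_prop)
  · filter_upwards [ae_restrict_mem measurableSet_Ioi] with t ht w hw
    have ht' : 0 < t := ht
    have hw' : z.re / 2 < w.re := hw
    rw [← mul_assoc, norm_mul]
    have h1 := norm_Bexp_le w ht'
    have h2 : ‖(-(t : ℂ))‖ = t := by simp [abs_of_pos ht']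
    rw [h2]
    have h3 : Real.exp (-(w.re * t)) ≤ Real.exp (-(z.re / 4 * t)) * Real.exp (-(z.re / 4 * t)) := by
      rw [← Real.exp_add]
      apply Real.exp_le_exp.mpr
      nlinarith
    have h4 : t * Real.exp (-(z.re / 4 * t)) ≤ 1 / (z.re / 4) := by
      rw [le_div_iff₀ hr4]
      have h5 := Real.add_one_le_exp (z.re / 4 * t)
      have h6 : Real.exp (-(z.re / 4 * t)) * Real.exp (z.re / 4 * t) = 1 := by
        rw [← Real.exp_add]; simp
      have h7 := Real.exp_pos (-(z.re / 4 * t))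
      nlinarith
    have h7 := Real.exp_pos (-(z.re / 4 * t))
    calc _ ≤ 1 / 4 * (t * Real.exp (-(w.re * t))) * t := by gcongr
      _ ≤ 1 / 4 * (t * (Real.exp (-(z.re / 4 * t)) * Real.exp (-(z.re / 4 * t)))) * t := by gcongr
      _ = 1 / 4 * (t * Real.exp (-(z.re / 4 * t))) * (t * Real.exp (-(z.re / 4 * t))) := by ring
      _ ≤ _ := by gcongr
  · exact (integral_t_exp hr4).1.const_mul _
  · filter_upwards with t w _
    have h1 : HasDerivAt (fun w : ℂ => -(w * (t : ℂ))) (-(t : ℂ)) w := by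
      exact (((hasDerivAt_id w).mul_const (t : ℂ)).neg).congr_deriv (by simp)
    exact (h1.cexp).const_mul _

/-- Recurrence for `I` at positive reals. -/
lemma I_rec {y : ℝ} (hy : 0 < y) :
    I y - I ((y + 1 : ℝ) : ℂ) =
      ((1 / (2 * y) + 1 / (2 * (y + 1)) - Real.log ((y + 1) / y) : ℝ) : ℂ) := by
  have hy1 : 0 < y + 1 := by linarith
  have i1 := exp_neg_integrableOn_Ioi 0 hy
  have i2 := exp_neg_integrableOn_Ioi 0 hy1
  have j1 : ∫ t in Ioi (0 : ℝ), Real.exp (-y * t) = 1 / y := by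
    rw [integral_exp_mul_Ioi (by linarith)]; simp
  have j2 : ∫ t in Ioi (0 : ℝ), Real.exp (-(y + 1) * t) = 1 / (y + 1) := by
    rw [integral_exp_mul_Ioi (by linarith)]
    simp only [mul_zero, Real.exp_zero, neg_div_neg_eq]
  -- real form of the two integrals
  have real_int : ∀ a : ℝ, 0 < a → IntegrableOn (fun t => B t * Real.exp (-(a * t))) (Ioi 0) ∧
      I a = ((∫ t in Ioi (0 : ℝ), B t * Real.exp (-(a * t)) : ℝ) : ℂ) := by
    intro a ha
    have e : (fun t : ℝ => (B t : ℂ) * Complex.exp (-((a : ℂ) * t)))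
        = fun t : ℝ => ((B t * Real.exp (-(a * t)) : ℝ) : ℂ) := by
      ext t; push_cast; rfl
    have h := integrable_Bexp (z := (a : ℂ)) (by simpa using ha)
    rw [e] at h
    refine ⟨?_, ?_⟩
    · have := h.re
      simp only [RCLike.re_eq_complex_re, Complex.ofReal_re] at this
      exact this
    · unfold I
      rw [e, integral_complex_ofReal]
  obtain ⟨k1, l1⟩ := real_int y hy
  obtain ⟨k2, l2⟩ := real_int (y + 1) hy1
  rw [l1, l2, ← Complex.ofReal_sub, ← integral_sub k1 k2]
  congr 1
  have hpt : ∀ t ∈ Ioi (0 : ℝ), t⁻¹ • (Real.exp (-(y * t)) - Real.exp (-((y + 1) * t)))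
      = 1 / 2 * Real.exp (-y * t) + 1 / 2 * Real.exp (-(y + 1) * t)
        - (B t * Real.exp (-(y * t)) - B t * Real.exp (-((y + 1) * t))) := by
    intro t ht
    have ht' : 0 < t := ht
    have h := exp_sub_one_pos ht'
    have e1 : Real.exp (-y * t) = Real.exp (-(y * t)) := by ring_nf
    have e2 : Real.exp (-(y + 1) * t) = Real.exp (-((y + 1) * t)) := by ring_nf
    have e3 : Real.exp (-(y * t)) = Real.exp (-((y + 1) * t)) * Real.exp t := by
      rw [← Real.exp_add]; ring_nf
    rw [e1, e2, e3]
    unfold B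
    simp only [smul_eq_mul]
    field_simp
    ring
  have hint : IntegrableOn (fun t => 1 / 2 * Real.exp (-y * t) + 1 / 2 * Real.exp (-(y + 1) * t)
        - (B t * Real.exp (-(y * t)) - B t * Real.exp (-((y + 1) * t)))) (Ioi 0) :=
    ((i1.const_mul _).add (i2.const_mul _)).sub (k1.sub k2)
  have fr := Frullani.integral_Ioi_eq (f := fun t : ℝ => Real.exp (-t)) (a := y) (b := y + 1)
    (L := 1) (R := 0)
    ((by fun_prop : Continuous fun t : ℝ => Real.exp (-t)).locallyIntegrable.locallyIntegrableOn _)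
    hy hy1
    (by
      have : Tendsto (fun t : ℝ => Real.exp (-t)) (𝓝 0) (𝓝 (Real.exp (-0))) :=
        (by fun_prop : Continuous fun t : ℝ => Real.exp (-t)).tendsto 0
      simp only [neg_zero, Real.exp_zero] at this
      exact this.mono_left nhdsWithin_le_nhds)
    Real.tendsto_exp_neg_atTop_nhds_zero
    (hint.congr_fun (fun t ht => (hpt t ht).symm) measurableSet_Ioi)
  rw [setIntegral_congr_fun measurableSet_Ioi hpt, integral_sub, integral_add,
    integral_const_mul, integral_const_mul, j1, j2] at fr
  · simp only [smul_eq_mul, sub_zero, mul_one] at fr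
    have e1 : 1 / (2 * y) = 1 / 2 * (1 / y) := by field_simp
    have e2 : 1 / (2 * (y + 1)) = 1 / 2 * (1 / (y + 1)) := by field_simp
    rw [e1, e2]
    linarith
  · exact i1.const_mul _
  · exact i2.const_mul _
  · exact (i1.const_mul _).add (i2.const_mul _)
  · exact k1.sub k2

lemma deriv_Gamma_real {y : ℝ} (hy : 0 < y) :
    deriv Complex.Gamma (y : ℂ) = ((deriv Real.Gamma y : ℝ) : ℂ) := by
  have h1 : DifferentiableAt ℂ Complex.Gamma (y : ℂ) := by
    apply Complex.differentiableAt_Gamma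
    intro m h
    have := congrArg Complex.re h
    simp at this
    have h2 : (0 : ℝ) ≤ m := Nat.cast_nonneg m
    linarith
  have h2 : DifferentiableAt ℝ Real.Gamma y := by
    apply Real.differentiableAt_Gamma
    intro m h
    have h2 : (0 : ℝ) ≤ m := Nat.cast_nonneg m
    linarith
  have a := h1.hasDerivAt.comp_ofReal
  have b := h2.hasDerivAt.ofReal_comp
  have e : (fun t : ℝ => Complex.Gamma (t : ℂ)) = fun t : ℝ => ((Real.Gamma t : ℝ) : ℂ) := by
    ext t
    exact Complex.Gamma_ofReal t
  rw [e] at a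
  exact a.unique b

/-- real digamma -/
noncomputable def psi (y : ℝ) : ℝ := deriv (Real.log ∘ Real.Gamma) y

lemma digammaC_ofReal {y : ℝ} (hy : 0 < y) : digammaC (y : ℂ) = ((psi y : ℝ) : ℂ) := by
  have h2 : DifferentiableAt ℝ Real.Gamma y := by
    apply Real.differentiableAt_Gamma
    intro m h
    have h2 : (0 : ℝ) ≤ m := Nat.cast_nonneg m
    linarith
  unfold digammaC psi
  rw [deriv_Gamma_real hy, Complex.Gamma_ofReal, Function.comp_def,
    deriv.log h2 (Real.Gamma_pos_of_pos hy).ne']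
  push_cast
  rfl

lemma psi_facts {y : ℝ} (hy : 0 < y) :
    psi (y + 1) = psi y + 1 / y ∧ psi y ≤ Real.log y ∧ Real.log y ≤ psi (y + 1) := by
  let f := Real.log ∘ Real.Gamma
  have hc : ConvexOn ℝ (Ioi 0) f := Real.convexOn_log_Gamma
  have h_rec (x : ℝ) (hx : 0 < x) : f (x + 1) = f x + Real.log x := by
    simp only [f, Function.comp_apply, Real.Gamma_add_one hx.ne',
      Real.log_mul hx.ne' (Real.Gamma_pos_of_pos hx).ne', add_comm]
  have hder {x : ℝ} (hx : 0 < x) : DifferentiableAt ℝ f x := by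
    refine ((Real.differentiableAt_Gamma ?_).log (Real.Gamma_ne_zero ?_)) <;>
    exact fun m ↦ ne_of_gt (by
      have h2 : (0 : ℝ) ≤ m := Nat.cast_nonneg m
      linarith)
  have hy1 : 0 < y + 1 := by linarith
  refine ⟨?_, ?_, ?_⟩
  · show deriv f (y + 1) = deriv f y + 1 / y
    rw [← deriv_comp_add_const, one_div, ← Real.deriv_log,
      ← deriv_add (hder <| by positivity) (Real.differentiableAt_log hy.ne')]
    apply EventuallyEq.deriv_eq
    filter_upwards [eventually_gt_nhds hy] using h_rec
  · have := hc.deriv_le_slope (x := y) (y := y + 1) hy hy1 (by linarith) (hder hy)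
    rw [slope_def_field, h_rec y hy] at this
    simp only [add_sub_cancel_left, div_one] at this
    exact this
  · have := hc.slope_le_deriv (x := y) (y := y + 1) hy hy1 (by linarith) (hder hy1)
    rw [slope_def_field, h_rec y hy] at this
    simp only [add_sub_cancel_left, div_one] at this
    exact this

noncomputable def phi (z : ℂ) : ℂ := digammaC z - Complex.log z + 1 / (2 * z)

lemma phi_ofReal {y : ℝ} (hy : 0 < y) :
    phi y = ((psi y - Real.log y + 1 / (2 * y) : ℝ) : ℂ) := by
  unfold phi
  rw [digammaC_ofReal hy, ← Complex.ofReal_log hy.le]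
  push_cast
  rfl

/-- Binet's formula at positive reals -/
lemma binet_real {y : ℝ} (hy : 0 < y) : phi y = - I y := by
  have hstep : ∀ n : ℕ, phi ((y + n : ℝ) : ℂ) + I ((y + n : ℝ) : ℂ) = phi y + I y := by
    intro n
    induction n with
    | zero => simp
    | succ n ih =>
      rw [← ih]
      have hp : 0 < y + n := by positivity
      have e : ((y + (n + 1 : ℕ) : ℝ)) = (y + n) + 1 := by push_cast; ring
      rw [e]
      have h1 := I_rec hp
      have hp1 : 0 < y + n + 1 := by linarith
      have h2 : I ((y + n + 1 : ℝ) : ℂ) = I ((y + n : ℝ) : ℂ) -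
        ((1 / (2 * (y + n)) + 1 / (2 * ((y + n) + 1)) - Real.log (((y + n) + 1) / (y + n)) : ℝ) : ℂ) := by
        rw [← h1]; ring
      rw [h2, phi_ofReal hp, phi_ofReal hp1, (psi_facts hp).1, Real.log_div hp1.ne' hp.ne']
      have e3 : 1 / (2 * (y + n)) = 1 / 2 * (1 / (y + n)) := by field_simp
      rw [e3]
      push_cast
      ring
  have hb : ∀ n : ℕ, ‖phi y + I y‖ ≤ 2 / (y + n) + 1 / 4 * (1 / (y + n) ^ 2) := by
    intro n
    have hp : 0 < y + n := by positivity
    rw [← hstep n]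
    refine (norm_add_le _ _).trans (add_le_add ?_ ?_)
    · rw [phi_ofReal hp, Complex.norm_real, Real.norm_eq_abs, abs_le]
      obtain ⟨h1, h2, h3⟩ := psi_facts hp
      have e3 : 1 / (2 * (y + n)) = 1 / 2 * (1 / (y + n)) := by field_simp
      have e4 : 2 / (y + n) = 2 * (1 / (y + n)) := by field_simp
      have e5 : 0 < 1 / (y + n) := by positivity
      rw [e3, e4]
      constructor <;> linarith
    · exact norm_I_le (z := ((y + n : ℝ) : ℂ)) (by simpa using hp)
  have hlim : Tendsto (fun n : ℕ => 2 / (y + n) + 1 / 4 * (1 / (y + n) ^ 2)) atTop (𝓝 0) := by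
    have h0 : Tendsto (fun n : ℕ => y + (n : ℝ)) atTop atTop :=
      tendsto_atTop_add_const_left _ _ tendsto_natCast_atTop_atTop
    have h1 : Tendsto (fun n : ℕ => (y + (n : ℝ))⁻¹) atTop (𝓝 0) := h0.inv_tendsto_atTop
    have h2 := (h1.const_mul 2).add ((h1.pow 2).const_mul (1 / 4))
    simp only [mul_zero, ne_eq, OfNat.ofNat_ne_zero, not_false_eq_true, zero_pow, add_zero] at h2
    refine h2.congr fun n => ?_
    simp [div_eq_mul_inv]
  have h0 : ‖phi y + I y‖ ≤ 0 := ge_of_tendsto' hlim hb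
  have := norm_le_zero_iff.mp h0
  linear_combination this

lemma phi_differentiableAt {z : ℂ} (hz : 0 < z.re) : DifferentiableAt ℂ phi z := by
  have hnat : ∀ w : ℂ, 0 < w.re → ∀ m : ℕ, w ≠ -m := by
    intro w hw m h
    have := congrArg Complex.re h
    simp at this
    have h2 : (0 : ℝ) ≤ m := Nat.cast_nonneg m
    linarith
  have hopen : IsOpen {w : ℂ | 0 < w.re} := isOpen_lt continuous_const Complex.continuous_re
  have hG : DifferentiableOn ℂ Complex.Gamma {w : ℂ | 0 < w.re} := fun w hw =>
    (Complex.differentiableAt_Gamma w (hnat w hw)).differentiableWithinAt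
  have hG' : DifferentiableAt ℂ (deriv Complex.Gamma) z :=
    (hG.deriv hopen).differentiableAt (hopen.mem_nhds hz)
  have hz0 : z ≠ 0 := by rintro rfl; simp at hz
  unfold phi
  refine DifferentiableAt.add (DifferentiableAt.sub ?_ ?_) ?_
  · unfold digammaC
    exact hG'.div (Complex.differentiableAt_Gamma z (hnat z hz)) (Complex.Gamma_ne_zero (hnat z hz))
  · exact Complex.differentiableAt_log (Or.inl hz)
  · refine DifferentiableAt.div (by fun_prop) (by fun_prop) (by simpa using hz0)

/-- Binet's formula -/
lemma binet {z : ℂ} (hz : 0 < z.re) : phi z = - I z := by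
  have hopen : IsOpen {w : ℂ | 0 < w.re} := isOpen_lt continuous_const Complex.continuous_re
  have hf : AnalyticOnNhd ℂ phi {w : ℂ | 0 < w.re} :=
    DifferentiableOn.analyticOnNhd (fun w hw => (phi_differentiableAt hw).differentiableWithinAt) hopen
  have hg : AnalyticOnNhd ℂ (fun w => - I w) {w : ℂ | 0 < w.re} :=
    DifferentiableOn.analyticOnNhd
      (fun w hw => (I_differentiableAt hw).neg.differentiableWithinAt) hopen
  have hpre : IsPreconnected {w : ℂ | 0 < w.re} := (convex_halfSpace_re_gt 0).isPreconnected
  refine hf.eqOn_of_preconnected_of_frequently_eq hg hpre (z₀ := 1) (by simp) ?_ hz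
  have ht : Tendsto (fun n : ℕ => ((1 + 1 / ((n : ℝ) + 1) : ℝ) : ℂ)) atTop (𝓝[≠] 1) := by
    apply tendsto_nhdsWithin_of_tendsto_nhds_of_eventually_within
    · have := (tendsto_one_div_add_atTop_nhds_zero_nat (𝕜 := ℝ)).const_add 1
      rw [add_zero] at this
      have := (Complex.continuous_ofReal.tendsto 1).comp this
      rw [Complex.ofReal_one] at this
      exact this
    · refine Eventually.of_forall fun n => ?_
      simp only [mem_compl_iff, mem_singleton_iff]
      intro h
      have h2 : (1 + 1 / ((n : ℝ) + 1)) = 1 := by exact_mod_cast h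
      have h3 : 0 < 1 / ((n : ℝ) + 1) := by positivity
      linarith
  refine ht.frequently (Frequently.of_forall fun n => ?_)
  exact binet_real (by positivity)

lemma re_mul_ofReal' (x : ℂ) (t : ℝ) : (x * (t : ℂ)).re = x.re * t := by simp

lemma norm_exp_gt {x : ℂ} (hx : 0 < x.re) {t : ℝ} (ht : 0 < t) : 1 < ‖Complex.exp (x * t)‖ := by
  rw [Complex.norm_exp, re_mul_ofReal']
  exact Real.one_lt_exp_iff.mpr (by positivity)

lemma exp_sub_ne {x : ℂ} (hx : 0 < x.re) {t : ℝ} (ht : 0 < t) : Complex.exp (x * t) - 1 ≠ 0 := by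
  intro h
  have h1 := norm_exp_gt hx ht
  rw [sub_eq_zero.mp h] at h1
  simp at h1

lemma exp_add_ne {x : ℂ} (hx : 0 < x.re) {t : ℝ} (ht : 0 < t) : Complex.exp (x * t) + 1 ≠ 0 := by
  intro h
  have h1 := norm_exp_gt hx ht
  rw [eq_neg_of_add_eq_zero_left h] at h1
  simp at h1

noncomputable def Sg (x : ℂ) : ℂ :=
  ∫ t in Ioi (0 : ℝ), (B t : ℂ) * (1 / (Complex.exp (x * t) - 1))

lemma integrable_Sg {x : ℂ} (hx : 0 < x.re) :
    IntegrableOn (fun t : ℝ => (B t : ℂ) * (1 / (Complex.exp (x * t) - 1))) (Ioi 0) := by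
  have hr : 0 < x.re / 2 := by linarith
  refine Integrable.mono' ((exp_neg_integrableOn_Ioi 0 hr).const_mul (1 / (4 * x.re))) ?_ ?_
  · have := measurable_B
    exact Measurable.aestronglyMeasurable (by fun_prop)
  · filter_upwards [ae_restrict_mem measurableSet_Ioi] with t ht
    have ht' : 0 < t := ht
    rw [norm_mul, Complex.norm_real, Real.norm_eq_abs, norm_div, norm_one]
    have h1 := abs_B_le ht'
    have hrt : 0 < x.re * t := by positivity
    have h2 : Real.exp (x.re * t) - 1 ≤ ‖Complex.exp (x * t) - 1‖ := by
      have := norm_sub_norm_le (Complex.exp (x * t)) 1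
      rwa [Complex.norm_exp, re_mul_ofReal', norm_one] at this
    have h3 : x.re * t * Real.exp (x.re / 2 * t) ≤ Real.exp (x.re * t) - 1 := by
      have h4 := Real.self_le_sinh_iff.mpr (show 0 ≤ x.re / 2 * t by positivity)
      rw [Real.sinh_eq] at h4
      have h5 : Real.exp (x.re * t) = Real.exp (x.re / 2 * t) * Real.exp (x.re / 2 * t) := by
        rw [← Real.exp_add]; ring_nf
      have h6 : Real.exp (-(x.re / 2 * t)) * Real.exp (x.re / 2 * t) = 1 := by
        rw [← Real.exp_add]; simp
      have h7 := Real.exp_pos (x.re / 2 * t)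
      nlinarith
    have h8 : 0 < x.re * t * Real.exp (x.re / 2 * t) := by positivity
    calc |B t| * (1 / ‖Complex.exp (x * t) - 1‖)
        ≤ t / 4 * (1 / (x.re * t * Real.exp (x.re / 2 * t))) := by
          gcongr
          exact h3.trans h2
      _ = 1 / (4 * x.re) * Real.exp (-(x.re / 2) * t) := by
          rw [neg_mul, Real.exp_neg]
          field_simp

lemma tsum_phi {x : ℂ} (hx : 0 < x.re) :
    ∑' n : ℕ, phi ((n + 1) * x) = - Sg x := by
  have hre : ∀ n : ℕ, (((n : ℂ) + 1) * x).re = (n + 1) * x.re := by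
    intro n
    simp
  have hpos : ∀ n : ℕ, 0 < (((n : ℂ) + 1) * x).re := by
    intro n
    rw [hre]
    positivity
  have h := hasSum_integral_of_summable_integral_norm
    (μ := volume.restrict (Ioi (0 : ℝ)))
    (F := fun (n : ℕ) (t : ℝ) => (B t : ℂ) * Complex.exp (-((((n : ℂ) + 1) * x) * t)))
    (fun n => integrable_Bexp (hpos n)) ?_
  · have e : ∫ t in Ioi (0 : ℝ), ∑' n : ℕ, (B t : ℂ) * Complex.exp (-((((n : ℂ) + 1) * x) * t))
        = Sg x := by
      apply setIntegral_congr_fun measurableSet_Ioi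
      intro t ht
      have ht' : 0 < t := ht
      have hq : ‖Complex.exp (-(x * t))‖ < 1 := by
        rw [Complex.norm_exp, Complex.neg_re, re_mul_ofReal']
        apply Real.exp_lt_one_iff.mpr
        have : 0 < x.re * t := by positivity
        linarith
      have hp : ∀ n : ℕ, (B t : ℂ) * Complex.exp (-((((n : ℂ) + 1) * x) * t))
          = (B t : ℂ) * Complex.exp (-(x * t)) * Complex.exp (-(x * t)) ^ n := by
        intro n
        rw [mul_assoc (B t : ℂ), ← pow_succ', ← Complex.exp_nat_mul]
        congr 2
        push_cast
        ring
      have h1 := exp_sub_ne hx ht'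
      have h0 := Complex.exp_ne_zero (x * t)
      show ∑' n : ℕ, (B t : ℂ) * Complex.exp (-((((n : ℂ) + 1) * x) * t)) = _
      simp_rw [hp]
      rw [tsum_mul_left, tsum_geometric_of_norm_lt_one hq, mul_assoc]
      congr 1
      rw [Complex.exp_neg]
      have h2 : 1 - (Complex.exp (x * t))⁻¹ = (Complex.exp (x * t) - 1) / Complex.exp (x * t) := by
        field_simp
      rw [h2]
      field_simp
    rw [e] at h
    have h' : HasSum (fun n : ℕ => phi ((n + 1) * x)) (- Sg x) := by
      refine h.neg.congr_fun ?_
      intro n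
      exact binet (hpos n)
    exact h'.tsum_eq
  · refine Summable.of_nonneg_of_le (fun n => integral_nonneg fun t => norm_nonneg _)
      (fun n => integral_norm_Bexp_le (hpos n)) ?_
    have hs : Summable (fun n : ℕ => 1 / ((n : ℝ) + 1) ^ 2) := by
      have := (summable_nat_add_iff 1).mpr (Real.summable_one_div_nat_pow.mpr one_lt_two)
      simpa using this
    refine (hs.mul_left (1 / 4 * (1 / x.re ^ 2))).congr fun n => ?_
    rw [hre]
    field_simp

lemma F1_eq {x : ℂ} (hx : 0 < x.re) :
    F1 x = - Sg x - (1 / 2) * ((Real.eulerMascheroniConstant : ℂ)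
      - Complex.log (2 * Real.pi / x)) := by
  unfold F1
  rw [← tsum_phi hx]
  congr 2
  ext n
  unfold phi
  rw [mul_assoc 2]

lemma integral_g {x : ℂ} (hx : 0 < x.re) :
    IntegrableOn (fun t : ℝ => 1 / (Complex.exp (x * t) + 1)) (Ioi 0) ∧
    ∫ t in Ioi (0 : ℝ), 1 / (Complex.exp (x * t) + 1) = Real.log 2 / x := by
  have hx0 : x ≠ 0 := by rintro rfl; simp at hx
  have hnorm : ∀ t : ℝ, ‖Complex.exp (-(x * t))‖ = Real.exp (-(x.re * t)) := by
    intro t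
    rw [Complex.norm_exp, Complex.neg_re, re_mul_ofReal']
  have hslit : ∀ t : ℝ, 0 < t → 1 + Complex.exp (-(x * t)) ∈ Complex.slitPlane := by
    intro t ht
    apply Complex.mem_slitPlane_of_norm_lt_one
    rw [hnorm]
    apply Real.exp_lt_one_iff.mpr
    have : 0 < x.re * t := by positivity
    linarith
  have hint : IntegrableOn (fun t : ℝ => 1 / (Complex.exp (x * t) + 1)) (Ioi 0) := by
    have hcx : Continuous (fun t : ℝ => Complex.exp (x * t) + 1) := by fun_prop
    have hc : ContinuousOn (fun t : ℝ => 1 / (Complex.exp (x * t) + 1)) (Ici 0) := by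
      refine ContinuousOn.div continuousOn_const hcx.continuousOn ?_
      intro t ht
      rcases (mem_Ici.mp ht).eq_or_lt with h | h
      · rw [← h]; norm_num
      · exact exp_add_ne hx h
    refine (integrableOn_Ici_iff_integrableOn_Ioi (by finiteness)).mp
      ((hc.locallyIntegrableOn measurableSet_Ici).integrableOn_of_isBigO_atTop
        (g := fun t : ℝ => Real.exp (-x.re * t)) ?_
        ⟨Ioi x.re, Ioi_mem_atTop x.re, exp_neg_integrableOn_Ioi x.re hx⟩)
    have hlt : Real.exp (-x.re) < 1 := Real.exp_lt_one_iff.mpr (by linarith)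
    refine Asymptotics.IsBigO.of_bound (1 / (1 - Real.exp (-x.re))) ?_
    filter_upwards [eventually_ge_atTop 1] with t ht
    rw [norm_div, norm_one, Real.norm_eq_abs, abs_of_pos (Real.exp_pos _)]
    have h2 : Real.exp (x.re * t) - 1 ≤ ‖Complex.exp (x * t) + 1‖ := by
      have := norm_sub_norm_le (Complex.exp (x * t)) (-1)
      rwa [Complex.norm_exp, re_mul_ofReal', norm_neg, norm_one, sub_neg_eq_add] at this
    have h3 : (1 - Real.exp (-x.re)) * Real.exp (x.re * t) ≤ Real.exp (x.re * t) - 1 := by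
      have h4 : 1 ≤ Real.exp (-x.re) * Real.exp (x.re * t) := by
        rw [← Real.exp_add]
        apply Real.one_le_exp
        nlinarith
      linarith
    have h5 : 0 < (1 - Real.exp (-x.re)) * Real.exp (x.re * t) :=
      mul_pos (by linarith) (Real.exp_pos _)
    calc 1 / ‖Complex.exp (x * t) + 1‖ ≤ 1 / ((1 - Real.exp (-x.re)) * Real.exp (x.re * t)) :=
          one_div_le_one_div_of_le h5 (h3.trans h2)
      _ = _ := by
          rw [neg_mul, Real.exp_neg (x.re * t), one_div_mul_eq_div, ← one_div, div_div,
            mul_comm (Real.exp (x.re * t))]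
  refine ⟨hint, ?_⟩
  have hd : ∀ t ∈ Ioi (0 : ℝ), HasDerivAt
      (fun t : ℝ => -(1 / x) * Complex.log (1 + Complex.exp (-(x * t))))
      (1 / (Complex.exp (x * t) + 1)) t := by
    intro t ht
    have h1 : HasDerivAt (fun w : ℂ => -(x * w)) (-x) (t : ℂ) :=
      (((hasDerivAt_id (t : ℂ)).const_mul x).neg).congr_deriv (by simp)
    have h2 := (h1.cexp.const_add 1).clog (hslit t ht)
    have h3 := (h2.const_mul (-(1 / x))).comp_ofReal
    refine h3.congr_deriv ?_
    have h4 := exp_add_ne hx ht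
    have h0 := Complex.exp_ne_zero (x * t)
    rw [Complex.exp_neg]
    have h5 : 1 + (Complex.exp (x * t))⁻¹ = (Complex.exp (x * t) + 1) / Complex.exp (x * t) := by
      field_simp
    rw [h5]
    field_simp
  have hcont : ContinuousWithinAt
      (fun t : ℝ => -(1 / x) * Complex.log (1 + Complex.exp (-(x * t)))) (Ici 0) 0 := by
    apply ContinuousAt.continuousWithinAt
    refine ContinuousAt.mul continuousAt_const ?_
    apply ContinuousAt.clog
    · fun_prop
    · left
      norm_num
  have htend : Tendsto (fun t : ℝ => -(1 / x) * Complex.log (1 + Complex.exp (-(x * t))))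
      atTop (𝓝 0) := by
    have h1 : Tendsto (fun t : ℝ => Complex.exp (-(x * t))) atTop (𝓝 0) := by
      rw [tendsto_zero_iff_norm_tendsto_zero]
      simp_rw [hnorm]
      exact Real.tendsto_exp_neg_atTop_nhds_zero.comp (tendsto_id.const_mul_atTop hx)
    have h2 := h1.const_add 1
    rw [add_zero] at h2
    have h3 := (h2.clog (by simp)).const_mul (-(1 / x))
    simpa using h3
  rw [integral_Ioi_of_hasDerivAt_of_tendsto hcont hd hint htend]
  have : (1 : ℂ) + 1 = ((2 : ℝ) : ℂ) := by norm_num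
  simp only [Complex.ofReal_zero, mul_zero, neg_zero, Complex.exp_zero]
  rw [this, ← Complex.ofReal_log (by norm_num)]
  ring

lemma log_div_shift {x : ℂ} (hx : 0 < x.re) {c : ℝ} (hc : 0 < c) :
    Complex.log (2 * Real.pi / (c * x)) = Complex.log (2 * Real.pi / x) - Real.log c := by
  have hx0 : x ≠ 0 := by rintro rfl; simp at hx
  have hc0 : (c : ℂ) ≠ 0 := by exact_mod_cast hc.ne'
  have e : 2 * (Real.pi : ℂ) / (c * x) = ((c⁻¹ : ℝ) : ℂ) * (2 * Real.pi / x) := by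
    push_cast
    field_simp
  rw [e, Complex.log_ofReal_mul (inv_pos.mpr hc), Real.log_inv]
  · push_cast; ring
  · have : (Real.pi : ℂ) ≠ 0 := by exact_mod_cast Real.pi_ne_zero
    exact div_ne_zero (mul_ne_zero two_ne_zero this) hx0

lemma J1_eq {x : ℂ} (hx : 0 < x.re) :
    J1 x + (3 * Sg x - 2 * Sg (2 * x) - Sg (x / 2)) = 1 / 2 * (Real.log 2 / x) := by
  have h2x : 0 < (2 * x).re := by simpa using hx
  have hx2 : 0 < (x / 2).re := by simpa using hx
  have i1 := integrable_Sg hx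
  have i2 := integrable_Sg h2x
  have i3 := integrable_Sg hx2
  have c1 : IntegrableOn (fun t : ℝ => (B (2 * t) : ℂ)
      * (1 / (Complex.exp (x * ((2 * t : ℝ) : ℂ)) - 1))) (Ioi 0) := by
    have := (integrableOn_Ioi_comp_mul_left_iff
      (fun t : ℝ => (B t : ℂ) * (1 / (Complex.exp (x * t) - 1))) 0 two_pos).mpr (by simpa using i1)
    exact this
  have c3 : IntegrableOn (fun t : ℝ => (B (2 * t) : ℂ)
      * (1 / (Complex.exp (x / 2 * ((2 * t : ℝ) : ℂ)) - 1))) (Ioi 0) := by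
    have := (integrableOn_Ioi_comp_mul_left_iff
      (fun t : ℝ => (B t : ℂ) * (1 / (Complex.exp (x / 2 * t) - 1))) 0 two_pos).mpr
      (by rw [mul_zero]; exact i3)
    exact this
  have e1 : Sg x = 2 * ∫ t in Ioi (0 : ℝ), (B (2 * t) : ℂ)
      * (1 / (Complex.exp (x * ((2 * t : ℝ) : ℂ)) - 1)) := by
    have := integral_comp_mul_left_Ioi
      (fun t : ℝ => (B t : ℂ) * (1 / (Complex.exp (x * t) - 1))) 0 two_pos
    rw [this, mul_zero, Complex.real_smul]
    unfold Sg
    push_cast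
    ring
  have e3 : Sg (x / 2) = 2 * ∫ t in Ioi (0 : ℝ), (B (2 * t) : ℂ)
      * (1 / (Complex.exp (x / 2 * ((2 * t : ℝ) : ℂ)) - 1)) := by
    have := integral_comp_mul_left_Ioi
      (fun t : ℝ => (B t : ℂ) * (1 / (Complex.exp (x / 2 * t) - 1))) 0 two_pos
    rw [this, mul_zero, Complex.real_smul]
    unfold Sg
    push_cast
    ring
  obtain ⟨ig, eg⟩ := integral_g hx
  have hJ : J1 x = ∫ t in Ioi (0 : ℝ), (1 / 2 * (1 / (Complex.exp (x * t) + 1))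
      - ((B t : ℂ) * (1 / (Complex.exp (x * t) - 1))
        + 4 * ((B (2 * t) : ℂ) * (1 / (Complex.exp (x * ((2 * t : ℝ) : ℂ)) - 1)))
        - 2 * ((B t : ℂ) * (1 / (Complex.exp (2 * x * t) - 1)))
        - 2 * ((B (2 * t) : ℂ) * (1 / (Complex.exp (x / 2 * ((2 * t : ℝ) : ℂ)) - 1))))) := by
    unfold J1
    apply setIntegral_congr_fun measurableSet_Ioi
    intro t ht
    have ht' : 0 < t := ht
    have a1 := exp_sub_ne hx ht'
    have a2 := exp_add_ne hx ht'
    have a3 := exp_sub_ne (x := 1) (by simp) ht'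
    have a4 := exp_add_ne (x := 1) (by simp) ht'
    have a5 : (t : ℂ) ≠ 0 := by exact_mod_cast ht'.ne'
    have a6 := Complex.exp_ne_zero (t : ℂ)
    rw [one_mul] at a3 a4
    have b1 : Complex.exp (x * ((2 * t : ℝ) : ℂ)) = Complex.exp (x * t) ^ 2 := by
      rw [← Complex.exp_nat_mul]; push_cast; ring_nf
    have b2 : Complex.exp (2 * x * t) = Complex.exp (x * t) ^ 2 := by
      rw [← Complex.exp_nat_mul]; push_cast; ring_nf
    have b3 : Complex.exp (x / 2 * ((2 * t : ℝ) : ℂ)) = Complex.exp (x * t) := by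
      push_cast; ring_nf
    have b4 : Complex.exp (2 * (t : ℂ)) = Complex.exp t ^ 2 := by
      rw [← Complex.exp_nat_mul]; push_cast; ring_nf
    show 1 / ((1 + Complex.exp (-(t : ℂ))) * (1 + Complex.exp (x * t))) = _
    beta_reduce
    rw [b1, b2, b3, Complex.exp_neg]
    unfold B
    push_cast
    rw [b4]
    generalize Complex.exp (x * t) = X at *
    generalize Complex.exp (t : ℂ) = E at *
    have d1 : X ^ 2 - 1 = (X - 1) * (X + 1) := by ring
    have d2 : E ^ 2 - 1 = (E - 1) * (E + 1) := by ring
    have d3 : 1 + E⁻¹ = (E + 1) / E := by field_simp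
    rw [d1, d2, d3, add_comm 1 X]
    field_simp
    ring
  rw [hJ, integral_sub, integral_sub, integral_sub, integral_add, integral_const_mul,
    integral_const_mul, integral_const_mul, integral_const_mul, eg]
  · have e1' : Sg x = ∫ t in Ioi (0 : ℝ), (B t : ℂ) * (1 / (Complex.exp (x * t) - 1)) := rfl
    have e2' : Sg (2 * x) =
      ∫ t in Ioi (0 : ℝ), (B t : ℂ) * (1 / (Complex.exp (2 * x * t) - 1)) := rfl
    rw [← e1', ← e2']
    linear_combination 2 * e1 - e3
  · exact i1
  · exact c1.const_mul 4
  · exact i1.add (c1.const_mul 4)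
  · exact i2.const_mul 2
  · exact (i1.add (c1.const_mul 4)).sub (i2.const_mul 2)
  · exact c3.const_mul 2
  · exact ig.const_mul _
  · exact ((i1.add (c1.const_mul 4)).sub (i2.const_mul 2)).sub (c3.const_mul 2)

end J1Proof

theorem J1_in_terms_of_F1 (x : ℂ) (hx : 0 < x.re) :
    J1 x + Real.log 2 =
      3 * F1 x - 2 * F1 (2 * x) - F1 (x / 2) + ((1 + x) / (2 * x)) * Real.log 2 := by
  have hx0 : x ≠ 0 := by rintro rfl; simp at hx
  have h2x : 0 < (2 * x).re := by simpa using hx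
  have hx2 : 0 < (x / 2).re := by simpa using hx
  rw [J1Proof.F1_eq hx, J1Proof.F1_eq h2x, J1Proof.F1_eq hx2]
  have l1 := J1Proof.log_div_shift hx (c := 2) two_pos
  have l2 := J1Proof.log_div_shift hx (c := 2⁻¹) (by norm_num)
  have e : (((2⁻¹ : ℝ) : ℂ) * x) = x / 2 := by push_cast; ring
  rw [e, Real.log_inv] at l2
  push_cast at l1 l2
  rw [l1, l2]
  have hJ := J1Proof.J1_eq hx
  have e2 : (1 + x) / (2 * x) * (Real.log 2 : ℂ) = 1 / 2 * (Real.log 2 / x) + 1 / 2 * Real.log 2 := by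
    field_simp
  rw [e2]
  linear_combination hJ
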